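/- (Bound on E[y^n_k y^n_{k'}], heavy-tail case α > 1/2.) Let φ : ℕ → ℝ with φ_i ≥ 0, φ_0 = 0, ∑_{i=1}^∞ φ_i = 1, and assume there exist K > 0 and α ∈ (1/2, 1) such that N^α ∑_{i=N}^∞ φ_i → K as N → ∞. Set δ = K Γ(1−α)/α, and let (a_n)_{n≥1} satisfy 0 < a_n < 1 and n^α(1−a_n) → λδ for some λ > 0. Let (ε_k)_{k≥0} be iid real random variables with E[ε_0] = 0 and E[ε_0²] = 1, and for each n define y^n_0 = ε_0 and y^n_k = ε_k + ∑_{i=1}^k a_n φ_i y^n_{k−i} for k ≥ 1. Then there exists c > 0 such that for every n ≥ 1 and all k, k' ≥ 0, E[y^n_k y^n_{k'}] ≤ c (1−a_n)^{1/α − 2}. -/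

import Mathlib

open MeasureTheory ProbabilityTheory Filter Set

/-- Convolution powers of a sequence. -/
noncomputable def convPow (φ : ℕ → ℝ) : ℕ → ℕ → ℝ
  | 0 => fun i => if i = 0 then 1 else 0
  | (l + 1) => fun k => ∑ j ∈ Finset.range (k + 1), convPow φ l j * φ (k - j)

/-- ψ^a_i = ∑_{l=0}^∞ a^l (φ^{*l})_i. -/
noncomputable def psiSeq (a : ℝ) (φ : ℕ → ℝ) (i : ℕ) : ℝ :=
  ∑' l : ℕ, a ^ l * convPow φ l i

/-- Fourier transform of a sequence indexed by ℕ. -/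
noncomputable def fourierSeq (f : ℕ → ℝ) (z : ℝ) : ℂ :=
  ∑' k : ℕ, (f k : ℂ) * Complex.exp (-(2 * Real.pi * Complex.I * k * z))

/-- Mittag-Leffler function E_{α,α}. -/
noncomputable def mittagLeffler (α u : ℝ) : ℝ :=
  ∑' k : ℕ, u ^ k / Real.Gamma (α * k + α)

/-- f^{α,λ}. -/
noncomputable def mlDensity (α lam s : ℝ) : ℝ :=
  lam * s ^ (α - 1) * mittagLeffler α (-lam * s ^ α)

/-- F^{α,λ}. -/
noncomputable def mlCDF (α lam x : ℝ) : ℝ :=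
  ∫ s in (0:ℝ)..x, mlDensity α lam s


noncomputable def psiRec (a : ℝ) (φ : ℕ → ℝ) : ℕ → ℝ
  | 0 => 1
  | (k + 1) => ∑ i : Fin (k + 1), a * φ (k + 1 - i.1) * psiRec a φ i.1
decreasing_by exact i.2

lemma psiRec_zero (a : ℝ) (φ : ℕ → ℝ) : psiRec a φ 0 = 1 := by
  rw [psiRec]

lemma psiRec_succ (a : ℝ) (φ : ℕ → ℝ) (k : ℕ) :
    psiRec a φ (k + 1) = ∑ i ∈ Finset.range (k + 1), a * φ (k + 1 - i) * psiRec a φ i := by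
  rw [psiRec, Finset.sum_range]

lemma psiRec_nonneg (a : ℝ) (ha : 0 ≤ a) (φ : ℕ → ℝ) (hφ : ∀ i, 0 ≤ φ i) (k : ℕ) :
    0 ≤ psiRec a φ k := by
  induction k using Nat.strong_induction_on with
  | _ k ih =>
    cases k with
    | zero => rw [psiRec_zero]; norm_num
    | succ k =>
      rw [psiRec_succ]
      refine Finset.sum_nonneg fun i hi => mul_nonneg (mul_nonneg ha (hφ _)) (ih i ?_)
      exact Finset.mem_range.1 hi

lemma psiRec_sum_le (a : ℝ) (ha : 0 < a) (ha1 : a < 1) (φ : ℕ → ℝ) (hφ : ∀ i, 0 ≤ φ i)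
    (hs : Summable φ) (hsum : ∑' i : ℕ, φ i = 1) (N : ℕ) :
    ∑ k ∈ Finset.range N, psiRec a φ k ≤ 1 / (1 - a) := by
  have h1a : 0 < 1 - a := by linarith
  have hstep : ∀ N, ∑ k ∈ Finset.range (N + 1), psiRec a φ k
      ≤ 1 + a * ∑ k ∈ Finset.range N, psiRec a φ k := by
    intro N
    rw [Finset.sum_range_succ', psiRec_zero, add_comm]
    gcongr
    simp_rw [psiRec_succ]
    have : ∀ k ∈ Finset.range N, ∑ i ∈ Finset.range (k + 1), a * φ (k + 1 - i) * psiRec a φ i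
        = ∑ i ∈ Finset.range N, if i ≤ k then a * φ (k + 1 - i) * psiRec a φ i else 0 := by
      intro k hk
      rw [← Finset.sum_filter]
      congr 1
      ext i
      simp only [Finset.mem_range, Finset.mem_filter] at *
      omega
    rw [Finset.sum_congr rfl this, Finset.sum_comm, Finset.mul_sum]
    refine Finset.sum_le_sum fun i hi => ?_
    have hp := psiRec_nonneg a ha.le φ hφ i
    have : ∑ k ∈ Finset.range N, (if i ≤ k then φ (k + 1 - i) else 0) ≤ 1 := by
      rw [← Finset.sum_filter, ← hsum]
      have hinj : Set.InjOn (fun k => k + 1 - i) (↑((Finset.range N).filter (fun k => i ≤ k)) : Set ℕ) := by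
        intro x hx y hy hxy
        simp at hx hy hxy
        omega
      rw [← Finset.sum_image (f := φ) hinj]
      exact hs.sum_le_tsum _ fun j _ => hφ j
    calc _ = a * psiRec a φ i * ∑ k ∈ Finset.range N, (if i ≤ k then φ (k + 1 - i) else 0) := by
            rw [Finset.mul_sum]
            refine Finset.sum_congr rfl fun k _ => ?_
            split_ifs <;> ring
      _ ≤ a * psiRec a φ i * 1 := by gcongr
      _ = _ := by ring
  induction N with
  | zero => simp; linarith
  | succ N ih =>
    refine (hstep N).trans ?_
    calc _ ≤ 1 + a * (1 / (1 - a)) := by gcongr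
      _ = _ := by field_simp; ring

lemma psiRec_summable (a : ℝ) (ha : 0 < a) (ha1 : a < 1) (φ : ℕ → ℝ) (hφ : ∀ i, 0 ≤ φ i)
    (hs : Summable φ) (hsum : ∑' i : ℕ, φ i = 1) : Summable (psiRec a φ) :=
  summable_of_sum_range_le (psiRec_nonneg a ha.le φ hφ) (psiRec_sum_le a ha ha1 φ hφ hs hsum)

lemma psiRec_conv (a : ℝ) (φ : ℕ → ℝ) (h0 : φ 0 = 0) (n : ℕ) :
    ∑ k ∈ Finset.range (n + 1), psiRec a φ k * (a * φ (n - k)) =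
      psiRec a φ n - if n = 0 then 1 else 0 := by
  cases n with
  | zero => simp [h0, psiRec_zero]
  | succ n =>
    rw [Finset.sum_range_succ, psiRec_succ]
    simp only [Nat.sub_self, h0, mul_zero, add_zero, Nat.succ_ne_zero, if_false, sub_zero]
    exact Finset.sum_congr rfl fun k _ => by ring

lemma psi_fourier (a : ℝ) (ha : 0 < a) (ha1 : a < 1) (φ : ℕ → ℝ) (hφ : ∀ i, 0 ≤ φ i)
    (hφ0 : φ 0 = 0) (hs : Summable φ) (hsum : ∑' i : ℕ, φ i = 1) (w : ℂ) (hw : ‖w‖ = 1) :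
    (∑' k : ℕ, (psiRec a φ k : ℂ) * w ^ k) * (1 - a * ∑' k : ℕ, (φ k : ℂ) * w ^ k) = 1 := by
  have hS := psiRec_summable a ha ha1 φ hφ hs hsum
  have n1 : Summable fun k : ℕ => ‖(psiRec a φ k : ℂ) * w ^ k‖ := by
    simpa [hw] using hS.abs
  have n2 : Summable fun k : ℕ => ‖((a * φ k : ℝ) : ℂ) * w ^ k‖ := by
    simpa [hw, abs_mul] using hs.abs.mul_left |a|
  have key := tsum_mul_tsum_eq_tsum_sum_range_of_summable_norm n1 n2
  have e : ∀ n : ℕ, ∑ k ∈ Finset.range (n + 1), ((psiRec a φ k : ℂ) * w ^ k) *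
      (((a * φ (n - k) : ℝ) : ℂ) * w ^ (n - k))
      = (psiRec a φ n : ℂ) * w ^ n - if n = 0 then 1 else 0 := by
    intro n
    have := congrArg (fun x : ℝ => (x : ℂ) * w ^ n) (psiRec_conv a φ hφ0 n)
    simp only [Complex.ofReal_sum, Finset.sum_mul] at this
    calc _ = _ := Finset.sum_congr rfl fun k hk => by
            have hk' : k + (n - k) = n := by have := Finset.mem_range.1 hk; omega
            have : w ^ n = w ^ k * w ^ (n - k) := by rw [← pow_add, hk']
            show _ = ((psiRec a φ k * (a * φ (n - k)) : ℝ) : ℂ) * w ^ n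
            rw [this]; push_cast; ring
      _ = _ := this
      _ = _ := by
        by_cases h : n = 0
        · subst h; simp
        · simp [h]
  simp_rw [e] at key
  rw [n1.of_norm.tsum_sub (hasSum_ite_eq 0 (1 : ℂ)).summable, tsum_ite_eq] at key
  have e2 : ∑' k : ℕ, ((a * φ k : ℝ) : ℂ) * w ^ k = a * ∑' k : ℕ, (φ k : ℂ) * w ^ k := by
    rw [← tsum_mul_left]
    exact tsum_congr fun k => by push_cast; ring
  rw [e2] at key
  linear_combination -key

lemma fourier_lower (φ : ℕ → ℝ) (hφ : ∀ i, 0 ≤ φ i)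
    (hs : Summable φ) (hsum : ∑' i : ℕ, φ i = 1) (K α : ℝ) (hK : 0 < K) (hα : 1 / 2 < α)
    (htail : Tendsto (fun N : ℕ => (N : ℝ) ^ α * ∑' i : ℕ, φ (N + i)) atTop (nhds K)) :
    ∃ e > 0, ∃ c > 0, ∀ z : ℝ, 0 < z → z ≤ e → c * z ^ α ≤ 1 - ∑' j : ℕ, φ j * Real.cos (j * z) := by
  have ev1 := htail.eventually (lt_mem_nhds (show 0.9 * K < K by linarith))
  have ev2 := htail.eventually (gt_mem_nhds (show K < 1.1 * K by linarith))
  obtain ⟨N0, hN0⟩ := eventually_atTop.1 (ev1.and ev2)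
  set q : ℝ := 2 / Real.pi ^ 2 * (1 / 32) ^ 2 with hq
  have hqpos : 0 < q := by positivity
  refine ⟨1 / (32 * (N0 + 1)), by positivity, q * (K / 2), by positivity, fun z hz hze => ?_⟩
  have hz1 : (N0 : ℝ) + 1 ≤ 1 / (32 * z) := by
    rw [le_div_iff₀ (by positivity)] at hze ⊢
    linarith
  set N := ⌊1 / (16 * z)⌋₊ with hN
  have hNle : (N : ℝ) ≤ 1 / (16 * z) := Nat.floor_le (by positivity)
  have hNgt : 1 / (16 * z) < N + 1 := Nat.lt_floor_add_one _
  have h2 : 1 / (16 * z) = 2 * (1 / (32 * z)) := by field_simp; norm_num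
  have hNge : 1 / (32 * z) ≤ N := by
    have : (0:ℝ) ≤ N0 := by positivity
    linarith
  have hNN0 : N0 ≤ N := by
    have : (N0 : ℝ) ≤ N := by linarith
    exact_mod_cast this
  have hNpos : (0:ℝ) < N := lt_of_lt_of_le (by positivity) hNge
  have hb1 := (hN0 N hNN0).1
  have hb2 := (hN0 (16 * N) (by omega)).2
  have hNz : 1 / 32 ≤ N * z := by
    rw [div_le_iff₀ (by positivity)] at hNge
    linarith
  have hNz' : 16 * N * z ≤ 1 := by
    rw [le_div_iff₀ (by positivity)] at hNle
    linarith
  -- tails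
  have hT : ∀ M : ℕ, ∑' i, φ (M + i) = 1 - ∑ j ∈ Finset.range M, φ j := by
    intro M
    have := hs.sum_add_tsum_nat_add M
    rw [hsum] at this
    simp_rw [add_comm M]
    linarith
  have hdiff : ∑ j ∈ Finset.Ico N (16 * N), φ j = (∑' i, φ (N + i)) - ∑' i, φ (16 * N + i) := by
    rw [hT, hT, Finset.sum_Ico_eq_sub _ (by omega)]; ring
  have h16 : (4:ℝ) ≤ 16 ^ α := by
    calc (4:ℝ) = 16 ^ (1/2 : ℝ) := by
          rw [← Real.sqrt_eq_rpow, show (16:ℝ) = 4 ^ 2 by norm_num, Real.sqrt_sq (by norm_num)]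
      _ ≤ _ := Real.rpow_le_rpow_of_exponent_le (by norm_num) hα.le
  have hmass : K / 2 ≤ (N:ℝ) ^ α * ∑ j ∈ Finset.Ico N (16 * N), φ j := by
    rw [hdiff, mul_sub]
    push_cast at hb2
    rw [Real.mul_rpow (by norm_num) hNpos.le] at hb2
    have hT0 : 0 ≤ (N:ℝ) ^ α * ∑' i, φ (16 * N + i) :=
      mul_nonneg (by positivity) (tsum_nonneg fun i => hφ _)
    nlinarith
  have hzN : z ^ α * (N:ℝ) ^ α ≤ 1 := by
    rw [← Real.mul_rpow hz.le hNpos.le]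
    exact Real.rpow_le_one (by positivity) (by nlinarith) (by linarith)
  have hmass2 : K / 2 * z ^ α ≤ ∑ j ∈ Finset.Ico N (16 * N), φ j := by
    have : 0 ≤ ∑ j ∈ Finset.Ico N (16 * N), φ j := Finset.sum_nonneg fun j _ => hφ j
    have hza : 0 < z ^ α := by positivity
    calc K / 2 * z ^ α ≤ ((N:ℝ) ^ α * ∑ j ∈ Finset.Ico N (16 * N), φ j) * z ^ α := by gcongr
      _ = (z ^ α * (N:ℝ) ^ α) * ∑ j ∈ Finset.Ico N (16 * N), φ j := by ring
      _ ≤ 1 * _ := by gcongr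
      _ = _ := one_mul _
  have hsc : Summable fun j : ℕ => φ j * Real.cos (j * z) := by
    refine Summable.of_norm_bounded hs fun j => ?_
    rw [Real.norm_eq_abs, abs_mul, abs_of_nonneg (hφ j)]
    exact mul_le_of_le_one_right (hφ j) (Real.abs_cos_le_one _)
  rw [← hsum, ← hs.tsum_sub hsc]
  calc q * (K / 2) * z ^ α = q * (K / 2 * z ^ α) := by ring
    _ ≤ q * ∑ j ∈ Finset.Ico N (16 * N), φ j := by gcongr
    _ = ∑ j ∈ Finset.Ico N (16 * N), q * φ j := Finset.mul_sum _ _ _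
    _ ≤ ∑ j ∈ Finset.Ico N (16 * N), (φ j - φ j * Real.cos (j * z)) := by
        refine Finset.sum_le_sum fun j hj => ?_
        obtain ⟨hj1, hj2⟩ := Finset.mem_Ico.1 hj
        have hj1' : (N:ℝ) ≤ j := by exact_mod_cast hj1
        have hj2' : (j:ℝ) ≤ 16 * N := by exact_mod_cast hj2.le
        have hjz : 1 / 32 ≤ j * z := hNz.trans (by gcongr)
        have hjz' : j * z ≤ 1 := le_trans (by gcongr) hNz'
        have hc := Real.cos_le_one_sub_mul_cos_sq (x := j * z) (by
          rw [abs_of_nonneg (by positivity)]; linarith [Real.pi_gt_three])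
        have : q ≤ 1 - Real.cos (j * z) := by
          have : q ≤ 2 / Real.pi ^ 2 * (j * z) ^ 2 := by rw [hq]; gcongr
          linarith
        nlinarith [hφ j]
    _ ≤ _ := by
        refine (hs.sub hsc).sum_le_tsum _ fun j _ => ?_
        nlinarith [hφ j, Real.cos_le_one (j * z)]

lemma tri_integral_nonneg (e : ℝ) (he : 0 < e) (m : ℝ) :
    0 ≤ ∫ z in (0:ℝ)..e, (1 - z / e) * Real.cos (m * z) := by
  by_cases hm : m = 0
  · subst hm
    refine intervalIntegral.integral_nonneg he.le fun z hz => ?_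
    have : z / e ≤ 1 := (div_le_one he).2 hz.2
    simp; linarith
  · have hder : ∀ z ∈ uIcc 0 e, HasDerivAt
        (fun z : ℝ => (1 - z / e) * (Real.sin (m * z) / m) - Real.cos (m * z) / (m ^ 2 * e))
        ((1 - z / e) * Real.cos (m * z)) z := by
      intro z _
      have hm1 : HasDerivAt (fun z : ℝ => m * z) m z := by
        simpa using (hasDerivAt_id z).const_mul m
      have h1 : HasDerivAt (fun z : ℝ => 1 - z / e) (-(1 / e)) z := by
        simpa using ((hasDerivAt_id z).div_const e).const_sub 1
      have h2 := (hm1.sin).div_const m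
      have h3 := (hm1.cos).div_const (m ^ 2 * e)
      refine ((h1.mul h2).sub h3).congr_deriv ?_
      field_simp
      ring
    rw [intervalIntegral.integral_eq_sub_of_hasDerivAt hder
      (Continuous.intervalIntegrable (by fun_prop) _ _)]
    have : ((1 - e / e) * (Real.sin (m * e) / m) - Real.cos (m * e) / (m ^ 2 * e)) -
        ((1 - 0 / e) * (Real.sin (m * 0) / m) - Real.cos (m * 0) / (m ^ 2 * e))
        = (1 - Real.cos (m * e)) / (m ^ 2 * e) := by
      rw [div_self he.ne']; simp; ring
    rw [this]
    have := Real.cos_le_one (m * e)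
    exact div_nonneg (by linarith) (by positivity)

lemma tri_integral_zero (e : ℝ) (he : 0 < e) :
    ∫ z in (0:ℝ)..e, (1 - z / e) = e / 2 := by
  rw [intervalIntegral.integral_sub (by simp) (Continuous.intervalIntegrable (by fun_prop) _ _),
    intervalIntegral.integral_div, integral_id]
  simp
  field_simp
  ring

lemma finite_parseval (p : ℕ → ℝ) (hp : ∀ k, 0 ≤ p k) (e : ℝ) (he : 0 < e) (N : ℕ) :
    e / 2 * ∑ k ∈ Finset.range N, p k ^ 2 ≤ ∫ z in (0:ℝ)..e, (1 - z / e) *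
      ((∑ k ∈ Finset.range N, p k * Real.cos (k * z)) ^ 2 +
       (∑ k ∈ Finset.range N, p k * Real.sin (k * z)) ^ 2) := by
  have h : ∀ z : ℝ, (1 - z / e) *
      ((∑ k ∈ Finset.range N, p k * Real.cos (k * z)) ^ 2 +
       (∑ k ∈ Finset.range N, p k * Real.sin (k * z)) ^ 2) =
      ∑ k ∈ Finset.range N, ∑ m ∈ Finset.range N,
        p k * p m * ((1 - z / e) * Real.cos (((k:ℝ) - m) * z)) := by
    intro z
    rw [sq, sq, Finset.sum_mul_sum, Finset.sum_mul_sum, ← Finset.sum_add_distrib, Finset.mul_sum]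
    refine Finset.sum_congr rfl fun k _ => ?_
    rw [← Finset.sum_add_distrib, Finset.mul_sum]
    refine Finset.sum_congr rfl fun m _ => ?_
    rw [sub_mul (k:ℝ), Real.cos_sub]; ring
  simp_rw [h]
  rw [intervalIntegral.integral_finsetSum
    (fun k _ => Continuous.intervalIntegrable (by fun_prop) _ _), Finset.mul_sum]
  refine Finset.sum_le_sum fun k hk => ?_
  rw [intervalIntegral.integral_finsetSum
    (fun m _ => Continuous.intervalIntegrable (by fun_prop) _ _)]
  simp_rw [intervalIntegral.integral_const_mul]
  have := Finset.single_le_sum (f := fun m : ℕ => p k * p m *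
    ∫ z in (0:ℝ)..e, (1 - z / e) * Real.cos (((k:ℝ) - m) * z)) (s := Finset.range N)
    (fun m _ => mul_nonneg (mul_nonneg (hp k) (hp m)) (tri_integral_nonneg e he _)) hk
  refine le_trans (le_of_eq ?_) this
  simp only [sub_self, zero_mul, Real.cos_zero, mul_one, tri_integral_zero e he]
  ring

lemma normSq_exp_sum (p : ℕ → ℝ) (N : ℕ) (z : ℝ) :
    ‖∑ k ∈ Finset.range N, (p k : ℂ) * Complex.exp (z * Complex.I) ^ k‖ ^ 2 =
      (∑ k ∈ Finset.range N, p k * Real.cos (k * z)) ^ 2 +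
       (∑ k ∈ Finset.range N, p k * Real.sin (k * z)) ^ 2 := by
  have h : ∀ k : ℕ, Complex.exp (z * Complex.I) ^ k = Complex.exp (((k * z : ℝ) : ℂ) * Complex.I) := by
    intro k; rw [← Complex.exp_nat_mul]; congr 1; push_cast; ring
  rw [← Complex.normSq_eq_norm_sq, Complex.normSq_apply]
  simp only [h, Complex.re_sum, Complex.im_sum, Complex.re_ofReal_mul, Complex.im_ofReal_mul,
    Complex.exp_ofReal_mul_I_re, Complex.exp_ofReal_mul_I_im]
  ring

lemma norm_exp_zI (z : ℝ) : ‖Complex.exp (z * Complex.I)‖ = 1 := Complex.norm_exp_ofReal_mul_I z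

lemma inf_parseval (p : ℕ → ℝ) (hp : ∀ k, 0 ≤ p k) (hs : Summable p) (e : ℝ) (he : 0 < e) (N : ℕ) :
    e / 2 * ∑ k ∈ Finset.range N, p k ^ 2 ≤ ∫ z in (0:ℝ)..e, (1 - z / e) *
      ‖∑' k : ℕ, (p k : ℂ) * Complex.exp (z * Complex.I) ^ k‖ ^ 2 := by
  have hnorm : ∀ z : ℝ, ∀ k : ℕ, ‖(p k : ℂ) * Complex.exp (z * Complex.I) ^ k‖ = p k := by
    intro z k
    rw [norm_mul, norm_pow, norm_exp_zI, one_pow, mul_one, Complex.norm_real, Real.norm_of_nonneg (hp k)]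
  have hT : Tendsto (fun M : ℕ => ∫ z in (0:ℝ)..e, (1 - z / e) *
      ‖∑ k ∈ Finset.range M, (p k : ℂ) * Complex.exp (z * Complex.I) ^ k‖ ^ 2) atTop
      (nhds (∫ z in (0:ℝ)..e, (1 - z / e) *
      ‖∑' k : ℕ, (p k : ℂ) * Complex.exp (z * Complex.I) ^ k‖ ^ 2)) := by
    refine intervalIntegral.tendsto_integral_filter_of_dominated_convergence
      (fun _ => (∑' k, p k) ^ 2) ?_ ?_ (by simp) ?_
    · exact Eventually.of_forall fun M => Continuous.aestronglyMeasurable (by fun_prop)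
    · refine Eventually.of_forall fun M => Eventually.of_forall fun z hz => ?_
      rw [uIoc_of_le he.le] at hz
      have h1 : z / e ≤ 1 := (div_le_one he).2 hz.2
      have h0 : 0 ≤ z / e := div_nonneg hz.1.le he.le
      have h2 : ‖∑ k ∈ Finset.range M, (p k : ℂ) * Complex.exp (z * Complex.I) ^ k‖ ≤ ∑' k, p k := by
        refine (norm_sum_le _ _).trans ?_
        simp_rw [hnorm]
        exact hs.sum_le_tsum _ fun k _ => hp k
      rw [Real.norm_of_nonneg (mul_nonneg (by linarith) (by positivity))]
      calc _ ≤ 1 * (∑' k, p k) ^ 2 := by gcongr; linarith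
        _ = _ := one_mul _
    · refine Eventually.of_forall fun z _ => ?_
      have hsz : Summable fun k : ℕ => (p k : ℂ) * Complex.exp (z * Complex.I) ^ k := by
        refine Summable.of_norm ?_
        simpa only [hnorm] using hs
      exact ((hsz.hasSum.tendsto_sum_nat.norm).pow 2).const_mul _
  refine ge_of_tendsto hT ?_
  filter_upwards [eventually_ge_atTop N] with M hM
  simp_rw [normSq_exp_sum]
  refine le_trans ?_ (finite_parseval p hp e he M)
  gcongr

lemma integral_upper (α : ℝ) (hα : 1 / 2 < α) (e C b : ℝ) (he : 0 < e) (hC : 0 ≤ C) (hb : 0 < b)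
    (f : ℝ → ℝ) (hf : Continuous f) (hf1 : ∀ z, 0 < z → z ≤ e → f z ≤ b ^ (-2 : ℝ))
    (hf2 : ∀ z, 0 < z → z ≤ e → f z ≤ C * z ^ (-(2 * α))) :
    ∫ z in (0:ℝ)..e, f z ≤ (1 + C / (2 * α - 1)) * b ^ (1 / α - 2) := by
  set t := b ^ (1 / α) with ht
  have hα0 : 0 < α := by linarith
  have h2α : 0 < 2 * α - 1 := by linarith
  have htpos : 0 < t := by positivity
  have htb : t * b ^ (-2 : ℝ) = b ^ (1 / α - 2) := by
    rw [ht, ← Real.rpow_add hb]; rfl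
  have htb2 : t ^ (-(2 * α) + 1) = b ^ (1 / α - 2) := by
    rw [ht, ← Real.rpow_mul hb.le]; congr 1; field_simp; ring
  have hP : 0 < b ^ (1 / α - 2) := by positivity
  have first : ∀ s, 0 ≤ s → s ≤ e → s ≤ t → ∫ z in (0:ℝ)..s, f z ≤ b ^ (1 / α - 2) := by
    intro s hs0 hs hst
    have : ∫ z in (0:ℝ)..s, f z ≤ ∫ z in (0:ℝ)..s, b ^ (-2 : ℝ) := by
      refine intervalIntegral.integral_mono_on_of_le_Ioo hs0 (hf.intervalIntegrable _ _) (by simp) ?_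
      intro z hz
      exact hf1 z hz.1 (hz.2.le.trans hs)
    refine this.trans ?_
    rw [intervalIntegral.integral_const, smul_eq_mul, sub_zero, ← htb]
    gcongr
  rcases le_total e t with h | h
  · refine (first e he.le le_rfl h).trans ?_
    have : 0 ≤ C / (2 * α - 1) := by positivity
    nlinarith
  · rw [← intervalIntegral.integral_add_adjacent_intervals (hf.intervalIntegrable 0 t)
      (hf.intervalIntegrable t e)]
    have h0 : (0:ℝ) ∉ uIcc t e := by
      rw [uIcc_of_le h]; intro hh; linarith [hh.1]
    have second : ∫ z in t..e, f z ≤ ∫ z in t..e, C * z ^ (-(2 * α)) := by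
      refine intervalIntegral.integral_mono_on h (hf.intervalIntegrable _ _)
        ((intervalIntegral.intervalIntegrable_rpow (Or.inr h0)).const_mul C) ?_
      intro z hz
      exact hf2 z (htpos.trans_le hz.1) hz.2
    rw [intervalIntegral.integral_const_mul, integral_rpow (Or.inr ⟨by linarith, h0⟩), htb2] at second
    have hE : 0 < e ^ (-(2 * α) + 1) := by positivity
    have : C * ((e ^ (-(2 * α) + 1) - b ^ (1 / α - 2)) / (-(2 * α) + 1))
        ≤ C / (2 * α - 1) * b ^ (1 / α - 2) := by
      have e1 : C * ((e ^ (-(2 * α) + 1) - b ^ (1 / α - 2)) / (-(2 * α) + 1))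
        = C / (2 * α - 1) * (b ^ (1 / α - 2) - e ^ (-(2 * α) + 1)) := by
        rw [show -(2 * α) + 1 = -(2 * α - 1) by ring, div_neg]; ring
      rw [e1]
      gcongr
      linarith
    have := first t htpos.le h le_rfl
    linarith

lemma psi_sq_bound (φ : ℕ → ℝ) (hφ : ∀ i, 0 ≤ φ i) (hφ0 : φ 0 = 0)
    (hs : Summable φ) (hsum : ∑' i : ℕ, φ i = 1) (K α : ℝ) (hK : 0 < K) (hα : 1 / 2 < α)
    (htail : Tendsto (fun N : ℕ => (N : ℝ) ^ α * ∑' i : ℕ, φ (N + i)) atTop (nhds K)) :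
    ∃ c > 0, ∀ a : ℝ, 0 < a → a < 1 → ∀ N : ℕ,
      ∑ k ∈ Finset.range N, psiRec a φ k ^ 2 ≤ c * (1 - a) ^ (1 / α - 2) := by
  obtain ⟨e, he, c, hc, hlow⟩ := fourier_lower φ hφ hs hsum K α hK hα htail
  have hα0 : 0 < α := by linarith
  have h2α : 0 < 2 * α - 1 := by linarith
  set C : ℝ := 4 / c ^ 2 with hC
  refine ⟨2 / e * (1 + C / (2 * α - 1)), by positivity, fun a ha ha1 N => ?_⟩
  have hb : 0 < 1 - a := by linarith
  set p := psiRec a φ with hp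
  have hpn := psiRec_nonneg a ha.le φ hφ
  have hps := psiRec_summable a ha ha1 φ hφ hs hsum
  set F : ℝ → ℝ := fun z => ‖∑' k : ℕ, (p k : ℂ) * Complex.exp (z * Complex.I) ^ k‖ with hF
  have hFc : Continuous F := by
    refine Continuous.norm (continuous_tsum (u := p) (fun k => by fun_prop) hps fun k z => ?_)
    rw [norm_mul, norm_pow, norm_exp_zI, one_pow, mul_one, Complex.norm_real,
      Real.norm_of_nonneg (hpn k)]
  -- lower bound on the symbol
  have hre : ∀ z : ℝ, F z * (1 - a * ∑' j : ℕ, φ j * Real.cos (j * z)) ≤ 1 := by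
    intro z
    have h := psi_fourier a ha ha1 φ hφ hφ0 hs hsum _ (norm_exp_zI z)
    have h' := congrArg norm h
    rw [norm_mul, norm_one] at h'
    have hsz : Summable fun k : ℕ => (φ k : ℂ) * Complex.exp (z * Complex.I) ^ k := by
      refine Summable.of_norm_bounded hs fun k => ?_
      rw [norm_mul, norm_pow, norm_exp_zI, one_pow, mul_one, Complex.norm_real,
        Real.norm_of_nonneg (hφ k)]
    have hr : (1 - (a:ℂ) * ∑' k : ℕ, (φ k : ℂ) * Complex.exp (z * Complex.I) ^ k).re
        = 1 - a * ∑' j : ℕ, φ j * Real.cos (j * z) := by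
      rw [Complex.sub_re, Complex.one_re, Complex.re_ofReal_mul, Complex.re_tsum hsz]
      congr 2
      refine tsum_congr fun k => ?_
      rw [← Complex.exp_nat_mul, show (k:ℂ) * (z * Complex.I) = ((k * z : ℝ) : ℂ) * Complex.I by
        push_cast; ring, Complex.re_ofReal_mul, Complex.exp_ofReal_mul_I_re]
    rw [← hr]
    calc _ ≤ F z * _ := mul_le_mul_of_nonneg_left (Complex.re_le_norm _) (norm_nonneg _)
      _ = 1 := h'
  have hrle : ∀ z : ℝ, ∑' j : ℕ, φ j * Real.cos (j * z) ≤ 1 := by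
    intro z
    rw [← hsum]
    have hb : ∀ j : ℕ, ‖φ j * Real.cos (j * z)‖ ≤ φ j := fun j => by
      rw [Real.norm_eq_abs, abs_mul, abs_of_nonneg (hφ j)]
      exact mul_le_of_le_one_right (hφ j) (Real.abs_cos_le_one _)
    exact (Summable.of_norm_bounded hs hb).tsum_le_tsum
      (fun j => (le_abs_self _).trans (hb j)) hs
  have hrge : ∀ z : ℝ, -1 ≤ ∑' j : ℕ, φ j * Real.cos (j * z) := by
    intro z
    rw [← hsum, ← tsum_neg]
    have hb : ∀ j : ℕ, ‖φ j * Real.cos (j * z)‖ ≤ φ j := fun j => by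
      rw [Real.norm_eq_abs, abs_mul, abs_of_nonneg (hφ j)]
      exact mul_le_of_le_one_right (hφ j) (Real.abs_cos_le_one _)
    exact hs.neg.tsum_le_tsum (fun j => (abs_le.1 (hb j)).1) (Summable.of_norm_bounded hs hb)
  have hF0 : ∀ z, 0 ≤ F z := fun z => norm_nonneg _
  have hF1 : ∀ z, F z ≤ (1 - a)⁻¹ := by
    intro z
    rw [← one_div, le_div_iff₀ hb]
    refine le_trans ?_ (hre z)
    have := hrle z
    exact mul_le_mul_of_nonneg_left (by nlinarith) (hF0 z)
  have hF2 : ∀ z, 0 < z → z ≤ e → F z ≤ 2 / c * z ^ (-α) := by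
    intro z hz hze
    have hza : 0 < z ^ α := by positivity
    rw [Real.rpow_neg hz.le, ← div_eq_mul_inv, div_div, le_div_iff₀ (by positivity)]
    have h1 := hre z
    have h2 := hlow z hz hze
    set r := ∑' j : ℕ, φ j * Real.cos (j * z)
    have h3 : (1 - r) / 2 ≤ 1 - a * r := by
      have := hrle z; have := hrge z
      nlinarith
    have : F z * (c * z ^ α / 2) ≤ F z * (1 - a * r) :=
      mul_le_mul_of_nonneg_left (by linarith) (hF0 z)
    linarith
  have hI := inf_parseval p hpn hps e he N
  have hI2 := integral_upper α hα e C (1 - a) he (by positivity) hb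
    (fun z => F z ^ 2) (by fun_prop) (fun z _ _ => by
      have h2 : (1 - a) ^ (-2 : ℝ) = ((1 - a)⁻¹) ^ 2 := by
        rw [Real.rpow_neg hb.le, inv_pow]; norm_num
      rw [h2]
      exact pow_le_pow_left₀ (hF0 z) (hF1 z) 2) (fun z hz hze => by
      have h2 : C * z ^ (-(2 * α)) = (2 / c * z ^ (-α)) ^ 2 := by
        rw [mul_pow, ← Real.rpow_natCast (z ^ (-α)), ← Real.rpow_mul hz.le, hC]
        congr 1
        · ring
        · congr 1; push_cast; ring
      rw [h2]
      exact pow_le_pow_left₀ (hF0 z) (hF2 z hz hze) 2)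
  have hI3 : ∫ z in (0:ℝ)..e, (1 - z / e) * F z ^ 2 ≤ ∫ z in (0:ℝ)..e, F z ^ 2 := by
    refine intervalIntegral.integral_mono_on he.le
      (Continuous.intervalIntegrable (by fun_prop) _ _)
      (Continuous.intervalIntegrable (by fun_prop) _ _) fun z hz => ?_
    have : 0 ≤ z / e := div_nonneg hz.1 he.le
    nlinarith [sq_nonneg (F z)]
  have hfin := hI.trans (hI3.trans hI2)
  calc ∑ k ∈ Finset.range N, p k ^ 2 = 2 / e * (e / 2 * ∑ k ∈ Finset.range N, p k ^ 2) := by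
        field_simp
    _ ≤ 2 / e * ((1 + C / (2 * α - 1)) * (1 - a) ^ (1 / α - 2)) := by gcongr
    _ = _ := by ring

lemma y_eq (a : ℝ) (φ : ℕ → ℝ) (x y : ℕ → ℝ) (h0 : y 0 = x 0)
    (hrec : ∀ k, 1 ≤ k → y k = x k + ∑ i ∈ Finset.Icc 1 k, a * φ i * y (k - i)) (k : ℕ) :
    y k = ∑ j ∈ Finset.range (k + 1), psiRec a φ (k - j) * x j := by
  induction k using Nat.strong_induction_on with
  | _ k ih =>
    cases k with
    | zero => simp [psiRec_zero, h0]
    | succ k =>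
      rw [hrec _ (by omega), Finset.sum_range_succ, Nat.sub_self, psiRec_zero, one_mul, add_comm]
      congr 1
      have e1 : ∑ i ∈ Finset.Icc 1 (k + 1), a * φ i * y (k + 1 - i)
          = ∑ m ∈ Finset.range (k + 1), a * φ (k + 1 - m) * y m := by
        refine Finset.sum_bij' (fun i _ => k + 1 - i) (fun m _ => k + 1 - m) ?_ ?_ ?_ ?_ ?_
        · intro i hi; simp at *; omega
        · intro i hi; simp at *; omega
        · intro i hi; simp at *; omega
        · intro i hi; simp at *; omega
        · intro i hi
          simp at hi
          rw [show k + 1 - (k + 1 - i) = i by omega]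
      rw [e1]
      have e2 : ∀ m ∈ Finset.range (k + 1), a * φ (k + 1 - m) * y m
          = ∑ j ∈ Finset.range (k + 1), if j ≤ m then
              a * φ (k + 1 - m) * psiRec a φ (m - j) * x j else 0 := by
        intro m hm
        rw [Finset.mem_range] at hm
        rw [ih m hm, ← Finset.sum_filter, Finset.mul_sum]
        refine Finset.sum_congr ?_ fun j _ => by ring
        ext i
        simp only [Finset.mem_range, Finset.mem_filter]
        omega
      rw [Finset.sum_congr rfl e2, Finset.sum_comm]
      refine Finset.sum_congr rfl fun j hj => ?_
      rw [Finset.mem_range] at hj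
      rw [show k + 1 - j = (k - j) + 1 by omega, psiRec_succ, Finset.sum_mul, ← Finset.sum_filter]
      refine Finset.sum_bij' (fun m _ => m - j) (fun i _ => i + j) ?_ ?_ ?_ ?_ ?_
      · intro i hi; simp at *; omega
      · intro i hi; simp at *; omega
      · intro i hi; simp at *; omega
      · intro i hi; simp at *
      · intro m hm
        simp at hm
        rw [show k - j + 1 - (m - j) = k + 1 - m by omega]


/-- heavy-tail bound, case `α > 1/2`:
`E[y^n_k y^n_{k'}] ≤ c (1−a_n)^{1/α − 2}`. -/
theorem ar_covariance_bound_heavy_tail_high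
    {Ω : Type*} [MeasurableSpace Ω] (P : Measure Ω) [IsProbabilityMeasure P]
    (φ : ℕ → ℝ) (hφnn : ∀ i, 0 ≤ φ i) (hφ0 : φ 0 = 0) (hφsum : ∑' i : ℕ, φ i = 1)
    (K α : ℝ) (hK : 0 < K) (hα0 : 0 < α) (hα1 : α < 1)
    (htail : Tendsto (fun N : ℕ => (N : ℝ) ^ α * ∑' i : ℕ, φ (N + i)) atTop (nhds K))
    (δ : ℝ) (hδ : δ = K * Real.Gamma (1 - α) / α)
    (a : ℕ → ℝ) (ha : ∀ n, 1 ≤ n → 0 < a n ∧ a n < 1)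
    (lam : ℝ) (hlam : 0 < lam)
    (haconv : Tendsto (fun n : ℕ => (n : ℝ) ^ α * (1 - a n)) atTop (nhds (lam * δ)))
    -- the `ε_k` are iid, square integrable, centered with unit variance
    (ε : ℕ → Ω → ℝ) (hεmeas : ∀ k, Measurable (ε k))
    (hεindep : iIndepFun ε P)
    (hεid : ∀ k, Measure.map (ε k) P = Measure.map (ε 0) P)
    (hεL2 : MemLp (ε 0) 2 P)
    (hεmean : ∫ ω, ε 0 ω ∂P = 0)
    (hεvar : ∫ ω, (ε 0 ω) ^ 2 ∂P = 1)
    (y : ℕ → ℕ → Ω → ℝ)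
    (hy0 : ∀ n, y n 0 = ε 0)
    (hyrec : ∀ n k, 1 ≤ k → ∀ ω,
      y n k ω = ε k ω + ∑ i ∈ Finset.Icc 1 k, a n * φ i * y n (k - i) ω)
    (hαhalf : 1 / 2 < α) :
    ∃ c > 0, ∀ n, 1 ≤ n → ∀ k k' : ℕ,
      ∫ ω, y n k ω * y n k' ω ∂P ≤ c * (1 - a n) ^ (1 / α - 2) := by
  have hs : Summable φ := by
    by_contra h
    rw [tsum_eq_zero_of_not_summable h] at hφsum
    norm_num at hφsum
  obtain ⟨c, hc, hbound⟩ := psi_sq_bound φ hφnn hφ0 hs hφsum K α hK hαhalf htail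
  have hident : ∀ k, IdentDistrib (ε 0) (ε k) P P := fun k =>
    ⟨(hεmeas 0).aemeasurable, (hεmeas k).aemeasurable, (hεid k).symm⟩
  have hL2 : ∀ k, MemLp (ε k) 2 P := fun k => (hident k).memLp_snd hεL2
  have hint : ∀ i j, Integrable (fun ω => ε i ω * ε j ω) P := fun i j =>
    (hL2 i).integrable_mul (hL2 j)
  have hmean : ∀ k, ∫ ω, ε k ω ∂P = 0 := fun k => by rw [← (hident k).integral_eq, hεmean]
  have hvar : ∀ k, ∫ ω, ε k ω * ε k ω ∂P = 1 := fun k => by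
    have := ((hident k).comp (u := fun x : ℝ => x ^ 2) (by fun_prop)).integral_eq
    simp only [Function.comp_apply, hεvar] at this
    rw [this]
    simp only [sq, Function.comp_apply]
  have hcov : ∀ i j, i ≠ j → ∫ ω, ε i ω * ε j ω ∂P = 0 := fun i j hij => by
    have := (hεindep.indepFun hij).integral_mul_eq_mul_integral
      (hεmeas i).aestronglyMeasurable (hεmeas j).aestronglyMeasurable
    simp only [Pi.mul_apply] at this
    rw [this, hmean, zero_mul]
  have hyeq : ∀ n k ω, y n k ω = ∑ j ∈ Finset.range (k + 1), psiRec (a n) φ (k - j) * ε j ω := by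
    intro n k ω
    exact y_eq (a n) φ (fun j => ε j ω) (fun k => y n k ω) (by rw [hy0]) (fun k hk => hyrec n k hk ω) k
  have hyL2 : ∀ n k, MemLp (y n k) 2 P := by
    intro n k
    have : y n k = fun ω => ∑ j ∈ Finset.range (k + 1), psiRec (a n) φ (k - j) * ε j ω := by
      ext ω; exact hyeq n k ω
    rw [this]
    exact memLp_finset_sum _ fun j _ => (hL2 j).const_mul _
  have hsq : ∀ n, 1 ≤ n → ∀ k, ∫ ω, y n k ω ^ 2 ∂P ≤ c * (1 - a n) ^ (1 / α - 2) := by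
    intro n hn k
    refine le_trans (le_of_eq ?_) (hbound (a n) (ha n hn).1 (ha n hn).2 (k + 1))
    rw [← Finset.sum_range_reflect]
    have e1 : ∀ ω, y n k ω ^ 2 = ∑ i ∈ Finset.range (k + 1), ∑ j ∈ Finset.range (k + 1),
        (psiRec (a n) φ (k - i) * psiRec (a n) φ (k - j)) * (ε i ω * ε j ω) := by
      intro ω
      rw [hyeq, sq, Finset.sum_mul_sum]
      exact Finset.sum_congr rfl fun i _ => Finset.sum_congr rfl fun j _ => by ring
    simp_rw [e1]
    rw [integral_finset_sum _ fun i _ => integrable_finset_sum _ fun j _ => (hint i j).const_mul _]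
    refine Finset.sum_congr rfl fun i hi => ?_
    rw [integral_finset_sum _ fun j _ => (hint i j).const_mul _]
    simp_rw [integral_const_mul]
    rw [Finset.sum_eq_single i]
    · rw [hvar, mul_one, sq]; rfl
    · intro j _ hji
      rw [hcov i j hji.symm, mul_zero]
    · intro h; exact absurd hi h
  refine ⟨c, hc, fun n hn k k' => ?_⟩
  have h1 := hsq n hn k
  have h2 := hsq n hn k'
  have i1 := (hyL2 n k).integrable_sq
  have i2 := (hyL2 n k').integrable_sq
  have h3 : ∫ ω, y n k ω * y n k' ω ∂P ≤ ∫ ω, (y n k ω ^ 2 + y n k' ω ^ 2) / 2 ∂P := by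
    refine integral_mono ((hyL2 n k).integrable_mul (hyL2 n k')) ((i1.add i2).div_const 2) ?_
    intro ω
    have := sq_nonneg (y n k ω - y n k' ω)
    show y n k ω * y n k' ω ≤ (y n k ω ^ 2 + y n k' ω ^ 2) / 2
    nlinarith
  rw [integral_div, integral_add i1 i2] at h3
  linarith
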